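/- Fix ρ ∈ (0,1) and ν ∈ ℝ, assume (ρ, ν) ≠ (1/√2, π/2 + nπ) for every integer n, and let α, β ∈ ℂ with |α|² + |β|² = 1. Then the limit density function integrates to one: ∫_{−h*}^{h*} (√(η₊(x)) + √(η₋(x))) · γ(x) / (2π(1−x²)√(ξ(x))) dx = 1. -/

import Mathlib

open Real

noncomputable section

/-- `ρ₀ = √(1-ρ²)`. -/
def rz (ρ : ℝ) : ℝ := Real.sqrt (1 - ρ ^ 2)

/-- `ξ(x) = (ρ²−x²)(ρ₀²−x²) − ρ²ρ₀²(cos²ν)x²`. -/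
def xif (ρ ν x : ℝ) : ℝ :=
  (ρ ^ 2 - x ^ 2) * ((rz ρ) ^ 2 - x ^ 2) - ρ ^ 2 * (rz ρ) ^ 2 * (Real.cos ν) ^ 2 * x ^ 2

/-- `η₊(x)`. -/
def etaP (ρ ν x : ℝ) : ℝ :=
  1 - ρ ^ 2 * (rz ρ) ^ 2 * (1 + (Real.sin ν) ^ 2)
    - (1 - ρ ^ 2 * (rz ρ) ^ 2 * (Real.cos ν) ^ 2) * x ^ 2
    + 2 * ρ * rz ρ * Real.sin ν * Real.sqrt (xif ρ ν x)

/-- `η₋(x)`. -/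
def etaM (ρ ν x : ℝ) : ℝ :=
  1 - ρ ^ 2 * (rz ρ) ^ 2 * (1 + (Real.sin ν) ^ 2)
    - (1 - ρ ^ 2 * (rz ρ) ^ 2 * (Real.cos ν) ^ 2) * x ^ 2
    - 2 * ρ * rz ρ * Real.sin ν * Real.sqrt (xif ρ ν x)

/-- `h*`. -/
def hstar (ρ ν : ℝ) : ℝ :=
  (1 / 2) * (Real.sqrt ((1 + ρ * rz ρ) ^ 2 - ρ ^ 2 * (rz ρ) ^ 2 * (Real.sin ν) ^ 2)
    - Real.sqrt ((1 - ρ * rz ρ) ^ 2 - ρ ^ 2 * (rz ρ) ^ 2 * (Real.sin ν) ^ 2))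

/-- `γ(x)`. -/
def gam (ρ ν : ℝ) (α β : ℂ) (x : ℝ) : ℝ :=
  1 + (‖α‖ ^ 2 - ‖β‖ ^ 2
    - (2 * rz ρ / ρ) * ((α * (starRingEnd ℂ) β).re * Real.cos ν
        - (α * (starRingEnd ℂ) β).im * Real.sin ν)) * x

/-!
The number `h = h*` and the number `H` obtained from it by turning the difference of the two square
roots into a sum satisfy `h H = ρρ₀` and `h² + H² = 1 + ρ²ρ₀²cos²ν`. Hence
`ξ(x) = (h² - x²)(H² - x²)` and `(1 - h²)(1 - H²) = (ρρ₀ sin ν)²`, which makes `η₊` and `η₋` the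
squares of `u + v` and `u - v`, where `u = √(1 - h²) √(H² - x²)` and `|v| ≤ u`. So
`√η₊ + √η₋ = 2u`, the factor `√(H² - x²)` cancels, and the density is `γ(x)` times Konno's density
`√(1 - h²) / (π (1 - x²) √(h² - x²))`. The latter is even with an arcsine primitive, so it has mass
one and the linear term of `γ` contributes nothing.
-/

open MeasureTheory Set

/-- Konno's density of parameter `h`, the limit density of the homogeneous quantum walk, to which
the density of the theorem is reduced. It is meant on `(-h, h)` only: no indicator function is
built in. -/
def konnoDensity (h x : ℝ) : ℝ :=
  √(1 - h ^ 2) / (π * (1 - x ^ 2) * √(h ^ 2 - x ^ 2))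

/-- The primitive of `konnoDensity h` on `[-h, h]` that vanishes at `0`. -/
def konnoPrimitive (h x : ℝ) : ℝ :=
  arcsin (√(1 - h ^ 2) / h * (x / √(1 - x ^ 2))) / π

/-- The larger nonnegative root `H` of `ξ` for `0 < ρ < 1`, the smaller one being `hstar ρ ν`. -/
def outerRoot (ρ ν : ℝ) : ℝ :=
  (1 / 2) * (√((1 + ρ * rz ρ) ^ 2 - ρ ^ 2 * (rz ρ) ^ 2 * (sin ν) ^ 2)
    + √((1 - ρ * rz ρ) ^ 2 - ρ ^ 2 * (rz ρ) ^ 2 * (sin ν) ^ 2))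

lemma sqrt_add_sq_add_sqrt_sub_sq {u v : ℝ} (hu : 0 ≤ u) (huv : v ^ 2 ≤ u ^ 2) :
    √((u + v) ^ 2) + √((u - v) ^ 2) = 2 * u := by
  obtain ⟨hl, hr⟩ := abs_le_of_sq_le_sq' huv hu
  rw [sqrt_sq (by linarith), sqrt_sq (by linarith)]
  ring

lemma integral_eq_zero_of_odd {E : Type*} [NormedAddCommGroup E] [NormedSpace ℝ E] {f : ℝ → E}
    (hf : f.Odd) (a : ℝ) : ∫ x in (-a)..a, f x = 0 := by
  have hneg : -∫ x in (-a)..a, f x = ∫ x in (-a)..a, f x := by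
    rw [← intervalIntegral.integral_neg]
    simpa only [hf.eq, neg_neg] using intervalIntegral.integral_comp_neg (a := -a) (b := a) f
  have : IsAddTorsionFree E := .of_isTorsionFree ℝ E
  exact neg_eq_self.mp hneg

lemma integral_mul_one_add_mul_of_even {f : ℝ → ℝ} {a : ℝ} (hf : f.Even)
    (hint : IntervalIntegrable f volume (-a) a) (c : ℝ) :
    ∫ x in (-a)..a, f x * (1 + c * x) = ∫ x in (-a)..a, f x := by
  have hodd : (fun x => f x * (c * x)).Odd := fun x => by simp only [hf.eq, mul_neg]
  simp only [mul_add, mul_one]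
  rw [intervalIntegral.integral_add hint (hint.mul_continuousOn (by fun_prop)),
    integral_eq_zero_of_odd hodd, add_zero]

lemma hasDerivAt_div_sqrt_one_sub_sq {x : ℝ} (hx : x ^ 2 < 1) :
    HasDerivAt (fun y => y / √(1 - y ^ 2)) (1 / √(1 - x ^ 2) ^ 3) x := by
  have hpos : 0 < 1 - x ^ 2 := sub_pos.mpr hx
  have hsqrt : √(1 - x ^ 2) ≠ 0 := (sqrt_pos.mpr hpos).ne'
  have hd := (hasDerivAt_id' x).div (((hasDerivAt_pow 2 x).const_sub 1).sqrt hpos.ne') hsqrt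
  refine hd.congr_deriv ?_
  field_simp
  rw [sq_sqrt hpos.le]
  ring

section Konno

variable {h x : ℝ}

lemma konnoDensity_even (h : ℝ) : (konnoDensity h).Even := fun x => by
  simp only [konnoDensity, neg_sq]

lemma one_sub_sq_konnoPrimitive_arg (h0 : h ≠ 0) (h1 : h ^ 2 ≤ 1) (hxh : x ^ 2 ≤ h ^ 2)
    (hx1 : x ^ 2 < 1) :
    1 - (√(1 - h ^ 2) / h * (x / √(1 - x ^ 2))) ^ 2 =
      (√(h ^ 2 - x ^ 2) / (h * √(1 - x ^ 2))) ^ 2 := by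
  have hpos : 0 < 1 - x ^ 2 := sub_pos.mpr hx1
  simp only [mul_pow, div_pow, sq_sqrt hpos.le, sq_sqrt (sub_nonneg.mpr h1),
    sq_sqrt (sub_nonneg.mpr hxh)]
  field_simp
  ring

lemma hasDerivAt_konnoPrimitive (h0 : 0 < h) (h1 : h < 1) (hx : x ∈ Ioo (-h) h) :
    HasDerivAt (konnoPrimitive h) (konnoDensity h x) x := by
  have hxh : x ^ 2 < h ^ 2 := sq_lt_sq' hx.1 hx.2
  have hh : h ^ 2 < 1 := pow_lt_one₀ h0.le h1 two_ne_zero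
  have hx1 : 0 < 1 - x ^ 2 := by linarith
  have ht : 0 < √(h ^ 2 - x ^ 2) := sqrt_pos.mpr (sub_pos.mpr hxh)
  have harg := one_sub_sq_konnoPrimitive_arg h0.ne' hh.le hxh.le (hxh.trans hh)
  have hlt : (√(1 - h ^ 2) / h * (x / √(1 - x ^ 2))) ^ 2 < 1 := by
    rw [← sub_pos, harg]
    positivity
  obtain ⟨hgt_neg_one, hlt_one⟩ := abs_lt.mp ((sq_lt_one_iff_abs_lt_one _).mp hlt)
  have hd := ((hasDerivAt_arcsin hgt_neg_one.ne' hlt_one.ne).comp x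
    ((hasDerivAt_div_sqrt_one_sub_sq (hxh.trans hh)).const_mul (√(1 - h ^ 2) / h))).div_const π
  refine hd.congr_deriv ?_
  rw [harg, sqrt_sq (by positivity), konnoDensity]
  field_simp
  rw [sq_sqrt hx1.le]

lemma continuousOn_konnoPrimitive (h0 : 0 ≤ h) (h1 : h < 1) :
    ContinuousOn (konnoPrimitive h) (Icc (-h) h) := by
  have hsqrt : ∀ x ∈ Icc (-h) h, √(1 - x ^ 2) ≠ 0 := fun x hx =>
    (sqrt_pos.mpr (by nlinarith [hx.1, hx.2])).ne'
  have harg : ContinuousOn (fun x => √(1 - h ^ 2) / h * (x / √(1 - x ^ 2))) (Icc (-h) h) :=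
    continuousOn_const.mul (continuousOn_id.div (by fun_prop) hsqrt)
  exact (continuous_arcsin.comp_continuousOn harg).div_const π

lemma konnoPrimitive_neg (h x : ℝ) : konnoPrimitive h (-x) = -konnoPrimitive h x := by
  simp only [konnoPrimitive, neg_sq, neg_div, mul_neg, arcsin_neg]

lemma konnoPrimitive_self (h0 : 0 < h) (h1 : h < 1) : konnoPrimitive h h = 1 / 2 := by
  have hsqrt : √(1 - h ^ 2) ≠ 0 := (sqrt_pos.mpr (by nlinarith)).ne'
  have harg : √(1 - h ^ 2) / h * (h / √(1 - h ^ 2)) = 1 := by field_simp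
  rw [konnoPrimitive, harg, arcsin_one]
  field_simp

lemma intervalIntegrable_konnoDensity (h0 : 0 < h) (h1 : h < 1) :
    IntervalIntegrable (konnoDensity h) volume (-h) h := by
  have hle : -h ≤ h := by linarith
  have hnonneg : ∀ x ∈ Ioo (-h) h, 0 ≤ konnoDensity h x := fun x hx => by
    have : 0 ≤ 1 - x ^ 2 := by nlinarith [hx.1, hx.2]
    unfold konnoDensity
    positivity
  rw [intervalIntegrable_iff_integrableOn_Ioc_of_le hle]
  exact intervalIntegral.integrableOn_deriv_of_nonneg (continuousOn_konnoPrimitive h0.le h1)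
    (fun x hx => hasDerivAt_konnoPrimitive h0 h1 hx) hnonneg

lemma integral_konnoDensity (h0 : 0 < h) (h1 : h < 1) :
    ∫ x in (-h)..h, konnoDensity h x = 1 := by
  rw [intervalIntegral.integral_eq_sub_of_hasDerivAt_of_le (by linarith)
    (continuousOn_konnoPrimitive h0.le h1) (fun x hx => hasDerivAt_konnoPrimitive h0 h1 hx)
    (intervalIntegrable_konnoDensity h0 h1), konnoPrimitive_neg, konnoPrimitive_self h0 h1]
  norm_num

lemma integral_konnoDensity_mul_one_add_mul (h0 : 0 < h) (h1 : h < 1) (c : ℝ) :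
    ∫ x in (-h)..h, konnoDensity h x * (1 + c * x) = 1 := by
  rw [integral_mul_one_add_mul_of_even (konnoDensity_even h)
    (intervalIntegrable_konnoDensity h0 h1), integral_konnoDensity h0 h1]

end Konno

lemma abs_mul_rz_le (ρ : ℝ) : |ρ * rz ρ| ≤ 1 / 2 := by
  refine abs_le_of_sq_le_sq ?_ (by norm_num)
  rw [mul_pow, rz]
  rcases le_total 0 (1 - ρ ^ 2) with hρ | hρ
  · rw [sq_sqrt hρ]
    nlinarith [sq_nonneg (2 * ρ ^ 2 - 1)]
  · rw [sqrt_eq_zero_of_nonpos hρ]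
    norm_num

lemma sq_mul_sin_sq_le {p : ℝ} (hp : -(1 / 2) ≤ p) (ν : ℝ) :
    p ^ 2 * sin ν ^ 2 ≤ (1 + p) ^ 2 := by
  calc p ^ 2 * sin ν ^ 2 ≤ p ^ 2 * 1 := by gcongr; exact sin_sq_le_one ν
    _ ≤ (1 + p) ^ 2 := by linarith

lemma hstar_radicand_add_nonneg (ρ ν : ℝ) :
    0 ≤ (1 + ρ * rz ρ) ^ 2 - ρ ^ 2 * rz ρ ^ 2 * sin ν ^ 2 := by
  rw [← mul_pow]
  exact sub_nonneg.mpr (sq_mul_sin_sq_le (abs_le.mp (abs_mul_rz_le ρ)).1 ν)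

lemma hstar_radicand_sub_nonneg (ρ ν : ℝ) :
    0 ≤ (1 - ρ * rz ρ) ^ 2 - ρ ^ 2 * rz ρ ^ 2 * sin ν ^ 2 := by
  have hp := sq_mul_sin_sq_le (neg_le_neg (abs_le.mp (abs_mul_rz_le ρ)).2) ν
  rw [neg_sq, mul_pow, ← sub_eq_add_neg] at hp
  exact sub_nonneg.mpr hp

lemma hstar_mul_outerRoot (ρ ν : ℝ) : hstar ρ ν * outerRoot ρ ν = ρ * rz ρ := by
  unfold hstar outerRoot
  linear_combination (sq_sqrt (hstar_radicand_add_nonneg ρ ν)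
    - sq_sqrt (hstar_radicand_sub_nonneg ρ ν)) / 4

lemma hstar_sq_add_outerRoot_sq (ρ ν : ℝ) :
    hstar ρ ν ^ 2 + outerRoot ρ ν ^ 2 = 1 + ρ ^ 2 * rz ρ ^ 2 * cos ν ^ 2 := by
  unfold hstar outerRoot
  linear_combination (sq_sqrt (hstar_radicand_add_nonneg ρ ν)
    + sq_sqrt (hstar_radicand_sub_nonneg ρ ν)) / 2 - ρ ^ 2 * rz ρ ^ 2 * sin_sq_add_cos_sq ν

lemma one_sub_hstar_sq_mul_one_sub_outerRoot_sq (ρ ν : ℝ) :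
    (1 - hstar ρ ν ^ 2) * (1 - outerRoot ρ ν ^ 2) = (ρ * rz ρ * sin ν) ^ 2 := by
  linear_combination (hstar ρ ν * outerRoot ρ ν + ρ * rz ρ) * hstar_mul_outerRoot ρ ν
    - hstar_sq_add_outerRoot_sq ρ ν - ρ ^ 2 * rz ρ ^ 2 * sin_sq_add_cos_sq ν

lemma abs_hstar_le_outerRoot (ρ ν : ℝ) : |hstar ρ ν| ≤ outerRoot ρ ν := by
  have hadd := sqrt_nonneg ((1 + ρ * rz ρ) ^ 2 - ρ ^ 2 * rz ρ ^ 2 * sin ν ^ 2)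
  have hsub := sqrt_nonneg ((1 - ρ * rz ρ) ^ 2 - ρ ^ 2 * rz ρ ^ 2 * sin ν ^ 2)
  unfold hstar outerRoot
  exact abs_le.mpr ⟨by linarith, by linarith⟩

lemma hstar_sq_le_outerRoot_sq (ρ ν : ℝ) : hstar ρ ν ^ 2 ≤ outerRoot ρ ν ^ 2 :=
  sq_le_sq.mpr ((abs_hstar_le_outerRoot ρ ν).trans (le_abs_self _))

lemma hstar_sq_le_half (ρ ν : ℝ) : hstar ρ ν ^ 2 ≤ 1 / 2 := by
  calc hstar ρ ν ^ 2 = |hstar ρ ν| * |hstar ρ ν| := by rw [← sq, sq_abs]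
    _ ≤ |hstar ρ ν| * |outerRoot ρ ν| :=
        mul_le_mul_of_nonneg_left (sq_le_sq.mp (hstar_sq_le_outerRoot_sq ρ ν)) (abs_nonneg _)
    _ = |ρ * rz ρ| := by rw [← abs_mul, hstar_mul_outerRoot]
    _ ≤ 1 / 2 := abs_mul_rz_le ρ

lemma hstar_lt_one (ρ ν : ℝ) : hstar ρ ν < 1 :=
  lt_of_pow_lt_pow_left₀ 2 zero_le_one (by linarith [hstar_sq_le_half ρ ν])

lemma hstar_pos {ρ : ℝ} (hρ : ρ ∈ Ioo (0 : ℝ) 1) (ν : ℝ) : 0 < hstar ρ ν := by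
  have hrz : 0 < rz ρ := sqrt_pos.mpr (by nlinarith [hρ.1, hρ.2])
  have hprod : 0 < hstar ρ ν * outerRoot ρ ν :=
    hstar_mul_outerRoot ρ ν ▸ mul_pos hρ.1 hrz
  exact pos_of_mul_pos_left hprod ((abs_nonneg _).trans (abs_hstar_le_outerRoot ρ ν))

section Density

variable {ρ ν x : ℝ}

lemma xif_eq_mul (hρ : ρ ^ 2 ≤ 1) (ν x : ℝ) :
    xif ρ ν x = (hstar ρ ν ^ 2 - x ^ 2) * (outerRoot ρ ν ^ 2 - x ^ 2) := by
  have hrz : rz ρ ^ 2 = 1 - ρ ^ 2 := sq_sqrt (sub_nonneg.mpr hρ)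
  unfold xif
  linear_combination x ^ 2 * hstar_sq_add_outerRoot_sq ρ ν - x ^ 2 * hrz
    - (hstar ρ ν * outerRoot ρ ν + ρ * rz ρ) * hstar_mul_outerRoot ρ ν

lemma sqrt_xif (hρ : ρ ^ 2 ≤ 1) (hx : x ^ 2 ≤ hstar ρ ν ^ 2) :
    √(xif ρ ν x) = √(hstar ρ ν ^ 2 - x ^ 2) * √(outerRoot ρ ν ^ 2 - x ^ 2) := by
  rw [xif_eq_mul hρ, sqrt_mul (sub_nonneg.mpr hx)]

lemma sqrt_one_sub_hstar_sq_pos (ρ ν : ℝ) : 0 < √(1 - hstar ρ ν ^ 2) :=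
  sqrt_pos.mpr (by linarith [hstar_sq_le_half ρ ν])

/-- The half-sum `u` of `√η₊` and `√η₋` on `[-h*, h*]`. -/
def etaMajor (ρ ν x : ℝ) : ℝ :=
  √(1 - hstar ρ ν ^ 2) * √(outerRoot ρ ν ^ 2 - x ^ 2)

/-- The number `v` with `η₊ = (u + v)²` and `η₋ = (u - v)²`, where `u` is `etaMajor`. It is
`±√(1 - H²) √(h² - x²)`; dividing by `√(1 - h²)`, which never vanishes, gives it the sign of
`sin ν` without a case distinction. -/
def etaMinor (ρ ν x : ℝ) : ℝ :=
  ρ * rz ρ * sin ν / √(1 - hstar ρ ν ^ 2) * √(hstar ρ ν ^ 2 - x ^ 2)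

lemma etaMajor_nonneg (ρ ν x : ℝ) : 0 ≤ etaMajor ρ ν x :=
  mul_nonneg (sqrt_nonneg _) (sqrt_nonneg _)

lemma etaMajor_sq (hx : x ^ 2 ≤ hstar ρ ν ^ 2) :
    etaMajor ρ ν x ^ 2 = (1 - hstar ρ ν ^ 2) * (outerRoot ρ ν ^ 2 - x ^ 2) := by
  rw [etaMajor, mul_pow, sq_sqrt (by linarith [hstar_sq_le_half ρ ν]),
    sq_sqrt (sub_nonneg.mpr (hx.trans (hstar_sq_le_outerRoot_sq ρ ν)))]

lemma etaMinor_sq (hx : x ^ 2 ≤ hstar ρ ν ^ 2) :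
    etaMinor ρ ν x ^ 2 = (1 - outerRoot ρ ν ^ 2) * (hstar ρ ν ^ 2 - x ^ 2) := by
  have hpos : 0 < 1 - hstar ρ ν ^ 2 := by linarith [hstar_sq_le_half ρ ν]
  rw [etaMinor, mul_pow, div_pow, ← one_sub_hstar_sq_mul_one_sub_outerRoot_sq, sq_sqrt hpos.le,
    sq_sqrt (sub_nonneg.mpr hx), mul_div_cancel_left₀ _ hpos.ne']

lemma etaMinor_sq_le_etaMajor_sq (hx : x ^ 2 ≤ hstar ρ ν ^ 2) :
    etaMinor ρ ν x ^ 2 ≤ etaMajor ρ ν x ^ 2 := by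
  have hx1 : 0 ≤ 1 - x ^ 2 := by linarith [hstar_sq_le_half ρ ν]
  have hdiff : etaMajor ρ ν x ^ 2 - etaMinor ρ ν x ^ 2 =
      (outerRoot ρ ν ^ 2 - hstar ρ ν ^ 2) * (1 - x ^ 2) := by
    rw [etaMajor_sq hx, etaMinor_sq hx]
    ring
  rw [← sub_nonneg, hdiff]
  exact mul_nonneg (sub_nonneg.mpr (hstar_sq_le_outerRoot_sq ρ ν)) hx1

lemma etaMajor_sq_add_etaMinor_sq (hx : x ^ 2 ≤ hstar ρ ν ^ 2) :
    etaMajor ρ ν x ^ 2 + etaMinor ρ ν x ^ 2 =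
      1 - ρ ^ 2 * rz ρ ^ 2 * (1 + sin ν ^ 2) - (1 - ρ ^ 2 * rz ρ ^ 2 * cos ν ^ 2) * x ^ 2 := by
  rw [etaMajor_sq hx, etaMinor_sq hx]
  linear_combination (1 + x ^ 2) * hstar_sq_add_outerRoot_sq ρ ν
    - 2 * (hstar ρ ν * outerRoot ρ ν + ρ * rz ρ) * hstar_mul_outerRoot ρ ν
    + ρ ^ 2 * rz ρ ^ 2 * sin_sq_add_cos_sq ν

lemma etaMajor_mul_etaMinor (hρ : ρ ^ 2 ≤ 1) (hx : x ^ 2 ≤ hstar ρ ν ^ 2) :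
    etaMajor ρ ν x * etaMinor ρ ν x = ρ * rz ρ * sin ν * √(xif ρ ν x) := by
  have := sqrt_one_sub_hstar_sq_pos ρ ν
  rw [sqrt_xif hρ hx, etaMajor, etaMinor]
  field_simp

lemma etaP_eq_sq (hρ : ρ ^ 2 ≤ 1) (hx : x ^ 2 ≤ hstar ρ ν ^ 2) :
    etaP ρ ν x = (etaMajor ρ ν x + etaMinor ρ ν x) ^ 2 := by
  rw [etaP, ← etaMajor_sq_add_etaMinor_sq hx]
  linear_combination -2 * etaMajor_mul_etaMinor hρ hx

lemma etaM_eq_sq (hρ : ρ ^ 2 ≤ 1) (hx : x ^ 2 ≤ hstar ρ ν ^ 2) :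
    etaM ρ ν x = (etaMajor ρ ν x - etaMinor ρ ν x) ^ 2 := by
  rw [etaM, ← etaMajor_sq_add_etaMinor_sq hx]
  linear_combination 2 * etaMajor_mul_etaMinor hρ hx

lemma sqrt_etaP_add_sqrt_etaM (hρ : ρ ^ 2 ≤ 1) (hx : x ^ 2 ≤ hstar ρ ν ^ 2) :
    √(etaP ρ ν x) + √(etaM ρ ν x) = 2 * etaMajor ρ ν x := by
  rw [etaP_eq_sq hρ hx, etaM_eq_sq hρ hx, sqrt_add_sq_add_sqrt_sub_sq (etaMajor_nonneg ρ ν x)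
    (etaMinor_sq_le_etaMajor_sq hx)]

lemma sqrt_eta_add_div_eq_konnoDensity (hρ : ρ ^ 2 ≤ 1) (hx : x ^ 2 < hstar ρ ν ^ 2) :
    (√(etaP ρ ν x) + √(etaM ρ ν x)) / (2 * π * (1 - x ^ 2) * √(xif ρ ν x)) =
      konnoDensity (hstar ρ ν) x := by
  have hb : √(outerRoot ρ ν ^ 2 - x ^ 2) ≠ 0 :=
    (sqrt_pos.mpr (sub_pos.mpr (hx.trans_le (hstar_sq_le_outerRoot_sq ρ ν)))).ne'
  rw [sqrt_etaP_add_sqrt_etaM hρ hx.le, sqrt_xif hρ hx.le, etaMajor, konnoDensity]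
  field_simp

end Density

theorem stmt14_general (ρ ν : ℝ) (hρ : ρ ∈ Ioo (0 : ℝ) 1) (α β : ℂ) :
    ∫ x in (-(hstar ρ ν))..(hstar ρ ν),
        (√(etaP ρ ν x) + √(etaM ρ ν x)) * gam ρ ν α β x
          / (2 * π * (1 - x ^ 2) * √(xif ρ ν x)) = 1 := by
  have h0 : 0 < hstar ρ ν := hstar_pos hρ ν
  have hρ1 : ρ ^ 2 ≤ 1 := pow_le_one₀ hρ.1.le hρ.2.le
  have hdensity : EqOn
      (fun x => (√(etaP ρ ν x) + √(etaM ρ ν x)) * gam ρ ν α β x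
        / (2 * π * (1 - x ^ 2) * √(xif ρ ν x)))
      (fun x => konnoDensity (hstar ρ ν) x * gam ρ ν α β x)
      (Ioo (-(hstar ρ ν)) (hstar ρ ν)) := fun x hx => by
    dsimp only
    rw [mul_div_right_comm, sqrt_eta_add_div_eq_konnoDensity hρ1 (sq_lt_sq' hx.1 hx.2)]
  rw [intervalIntegral.integral_congr_Ioo_of_le (by linarith) hdensity]
  exact integral_konnoDensity_mul_one_add_mul h0 (hstar_lt_one ρ ν) _

/-- the limit density function integrates to one. -/
theorem stmt14 (ρ ν : ℝ) (hρ : ρ ∈ Set.Ioo (0 : ℝ) 1)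
    (hexc : ∀ n : ℤ, ¬(ρ = 1 / Real.sqrt 2 ∧ ν = π / 2 + n * π))
    (α β : ℂ) (hαβ : ‖α‖ ^ 2 + ‖β‖ ^ 2 = 1) :
    ∫ x in (-(hstar ρ ν))..(hstar ρ ν),
        (Real.sqrt (etaP ρ ν x) + Real.sqrt (etaM ρ ν x)) * gam ρ ν α β x
          / (2 * π * (1 - x ^ 2) * Real.sqrt (xif ρ ν x)) = 1 :=
  stmt14_general ρ ν hρ α β

end
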